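/- Given r ≥ 0 and any pair {x,y} ∈ π_r^{-1}(𝓔) with x < y, at least one of the following holds: {x,y} = {i_r, j_r}, or f_r(x⁺) = red, or y ≥ j_r + 1. -/

import Mathlib

/-!
The proof is an induction on `r` carrying the invariant `Inv`: there is a frontier `m` such that
every eligible pair `x < y ≤ m` has `x⁺` red, while all positions `k⁺` with `k ≥ m` are green.

Given the invariant, an eligible pair `x < y` with `x⁺` green has `y > m`, hence `y⁻` is green and
`y` is a candidate for `j_r`; so `y ≥ j_r`. If `y = j_r` and `x, x'` are two distinct such partners,
the clique property makes `{x, x'}` an eligible pair to the left of `j_r` whose left end is green,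
which was just excluded. So the partner of `j_r` is unique and equals `i_r`: this is the claim
(`Inv.le_jVal`, `Inv.eq_iVal`).

The operator `T` moves the frontier to `j_r` (`Inv.step`): as `j_r⁺` is green, `b = j_r`, the
positions in `[a, j_r)` become red, and an eligible pair straddling `a` was an eligible pair before,
with left end different from `i_r`, hence has a red left end. The clique property only applies to
distinct labels, so `Inv` also records that `π_r` is injective on `[μ]`; injectivity is preserved
because `k ↦ ←k` reverses each maximal red block (`aVal_bVal_dichotomy`).
-/

attribute [local instance] Classical.propDecidable

inductive Col where
  | green : Col
  | red : Col
deriving DecidableEq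

namespace TOp

/-- The color of position `k⁺`; positions outside `{lo⁺, …, (hi−1)⁺}` count as green. -/
def fpos (lo hi : ℕ) (f : ℕ → Col) (k : ℕ) : Col :=
  if lo ≤ k ∧ k + 1 ≤ hi then f k else Col.green

/-- `j` is a candidate value for `j_{(π,f)}` : there is `i < j` with
`f(i⁺) = f(j⁻) = green` and `{i,j} ∈ π⁻¹(𝓔)`. -/
def jSpec (lo hi : ℕ) (E : ℕ → ℕ → Prop) (π : ℕ → ℕ) (f : ℕ → Col) (j : ℕ) : Prop :=
  lo ≤ j ∧ j ≤ hi ∧ ∃ i, lo ≤ i ∧ i < j ∧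
    fpos lo hi f i = Col.green ∧ fpos lo hi f (j - 1) = Col.green ∧ E (π i) (π j)

/-- `(π,f)` is not a fixed point of `T`, i.e. `j_{(π,f)} < +∞`. -/
def hasJ (lo hi : ℕ) (E : ℕ → ℕ → Prop) (π : ℕ → ℕ) (f : ℕ → Col) : Prop :=
  ∃ j, jSpec lo hi E π f j

/-- `j_{(π,f)}` (junk value if no candidate exists). -/
noncomputable def jVal (lo hi : ℕ) (E : ℕ → ℕ → Prop) (π : ℕ → ℕ) (f : ℕ → Col) : ℕ :=
  sInf {j | jSpec lo hi E π f j}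

/-- `i_{(π,f)}`. -/
noncomputable def iVal (lo hi : ℕ) (E : ℕ → ℕ → Prop) (π : ℕ → ℕ) (f : ℕ → Col) : ℕ :=
  sSup {i | lo ≤ i ∧ i < jVal lo hi E π f ∧ fpos lo hi f i = Col.green ∧
    E (π i) (π (jVal lo hi E π f))}

/-- `a_{(π,f)}(k)`. -/
noncomputable def aVal (lo hi : ℕ) (f : ℕ → Col) (k : ℕ) : ℕ :=
  if fpos lo hi f (k - 1) = Col.green then k
  else sInf {i' | i' ≤ k ∧ ∀ i'', i' ≤ i'' → i'' < k → fpos lo hi f i'' = Col.red}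

/-- `b_{(π,f)}(k)`. -/
noncomputable def bVal (lo hi : ℕ) (f : ℕ → Col) (k : ℕ) : ℕ :=
  if fpos lo hi f k = Col.green then k
  else sSup {j' | k ≤ j' ∧ ∀ j'', k < j'' → j'' ≤ j' → fpos lo hi f (j'' - 1) = Col.red}

/-- The operator `T` on states `(π, f)`. -/
noncomputable def Tstep (lo hi : ℕ) (E : ℕ → ℕ → Prop)
    (s : (ℕ → ℕ) × (ℕ → Col)) : (ℕ → ℕ) × (ℕ → Col) :=
  if hasJ lo hi E s.1 s.2 then
    let a := aVal lo hi s.2 (iVal lo hi E s.1 s.2)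
    let b := bVal lo hi s.2 (jVal lo hi E s.1 s.2)
    (fun k => if a ≤ k ∧ k ≤ b then
        s.1 (aVal lo hi s.2 (a + b - k) + bVal lo hi s.2 (a + b - k) - (a + b - k))
      else s.1 k,
     fun k => if a ≤ k ∧ k < b then Col.red else s.2 k)
  else s

/-- `(π_r, f_r) = T^r(π₀, 𝐠𝐫𝐞𝐞𝐧)`. -/
noncomputable def TIter (lo hi : ℕ) (E : ℕ → ℕ → Prop) (π₀ : ℕ → ℕ) (r : ℕ) :
    (ℕ → ℕ) × (ℕ → Col) :=
  (Tstep lo hi E)^[r] (π₀, fun _ => Col.green)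

/-- `j_{(π,f)}` as an extended natural number (`⊤` encodes `+∞`). -/
noncomputable def jE (lo hi : ℕ) (E : ℕ → ℕ → Prop) (π : ℕ → ℕ) (f : ℕ → Col) : ℕ∞ :=
  if hasJ lo hi E π f then (jVal lo hi E π f : ℕ∞) else ⊤

end TOp

namespace TOp

section Blocks

variable {hi : ℕ} {f : ℕ → Col}

lemma ne_green {c : Col} : c ≠ Col.green ↔ c = Col.red := by
  cases c <;> simp

lemma fpos_one_zero : fpos 1 hi f 0 = Col.green := by simp [fpos]

lemma fpos_hi {k : ℕ} (h : hi ≤ k) : fpos 1 hi f k = Col.green := by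
  unfold fpos
  rw [if_neg (by omega)]

/-- `a(k)` is the left end of the maximal red block containing `k`. -/
lemma aVal_spec {k : ℕ} (hk : 1 ≤ k) :
    1 ≤ aVal 1 hi f k ∧ aVal 1 hi f k ≤ k ∧
      (∀ m, aVal 1 hi f k ≤ m → m < k → fpos 1 hi f m = Col.red) ∧
      fpos 1 hi f (aVal 1 hi f k - 1) = Col.green := by
  unfold aVal
  split_ifs with h
  · exact ⟨hk, le_rfl, fun m _ _ => by omega, h⟩
  · set S := {i' | i' ≤ k ∧ ∀ i'', i' ≤ i'' → i'' < k → fpos 1 hi f i'' = Col.red} with hS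
    have hkS : k ∈ S := ⟨le_rfl, fun m _ _ => by omega⟩
    obtain ⟨h1, h2⟩ : sInf S ∈ S := Nat.sInf_mem ⟨k, hkS⟩
    have hpos : 1 ≤ sInf S := by
      by_contra h0
      have := h2 0 (by omega) (by omega)
      rw [fpos_one_zero] at this
      cases this
    refine ⟨hpos, h1, h2, ?_⟩
    by_contra hg
    have hmem : sInf S - 1 ∈ S := by
      refine ⟨by omega, fun m hm hmk => ?_⟩
      rcases Nat.lt_or_ge m (sInf S) with hlt | hge
      · obtain rfl : m = sInf S - 1 := by omega
        exact ne_green.1 hg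
      · exact h2 m hge hmk
    have := Nat.sInf_le hmem
    omega

/-- `b(k)` is the right end of the maximal red block containing `k`. -/
lemma bVal_spec {k : ℕ} (hk : k ≤ hi) :
    k ≤ bVal 1 hi f k ∧
      (∀ m, k ≤ m → m < bVal 1 hi f k → fpos 1 hi f m = Col.red) ∧
      fpos 1 hi f (bVal 1 hi f k) = Col.green := by
  unfold bVal
  split_ifs with h
  · exact ⟨le_rfl, fun m _ _ => by omega, h⟩
  · set S := {j' | k ≤ j' ∧ ∀ j'', k < j'' → j'' ≤ j' → fpos 1 hi f (j'' - 1) = Col.red} with hS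
    have hkS : k ∈ S := ⟨le_rfl, fun m _ _ => by omega⟩
    -- The position `hi⁺` counts as green, so a red block cannot extend past `hi`.
    have hbdd : BddAbove S := by
      refine ⟨hi, fun j' hj' => ?_⟩
      by_contra hlt
      have := hj'.2 (hi + 1) (by omega) (by omega)
      rw [fpos_hi (by omega)] at this
      cases this
    obtain ⟨h1, h2⟩ : sSup S ∈ S := Nat.sSup_mem ⟨k, hkS⟩ hbdd
    refine ⟨h1, fun m hm hms => h2 (m + 1) (by omega) (by omega), ?_⟩
    by_contra hg
    have hmem : sSup S + 1 ∈ S := by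
      refine ⟨by omega, fun m hm hmk => ?_⟩
      rcases Nat.lt_or_ge (sSup S) m with hlt | hge
      · obtain rfl : m = sSup S + 1 := by omega
        exact ne_green.1 hg
      · exact h2 m hm hge
    have := le_csSup hbdd hmem
    omega

lemma le_aVal {k m : ℕ} (hk : 1 ≤ k) (hm : m < k) (hg : fpos 1 hi f m = Col.green) :
    m < aVal 1 hi f k := by
  by_contra hlt
  have := (aVal_spec (hi := hi) (f := f) hk).2.2.1 m (by omega) hm
  rw [hg] at this
  cases this

lemma bVal_le {k m : ℕ} (hk : k ≤ hi) (hm : k ≤ m) (hg : fpos 1 hi f m = Col.green) :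
    bVal 1 hi f k ≤ m := by
  by_contra hlt
  have := (bVal_spec (hi := hi) (f := f) hk).2.1 m hm (by omega)
  rw [hg] at this
  cases this

/-- Two points lie in the same red block, or the block of the smaller one ends before the block
of the larger one starts. -/
lemma aVal_bVal_dichotomy {k l : ℕ} (hk : 1 ≤ k) (hkl : k < l) (hl : l ≤ hi) :
    (aVal 1 hi f k = aVal 1 hi f l ∧ bVal 1 hi f k = bVal 1 hi f l) ∨
      bVal 1 hi f k < aVal 1 hi f l := by
  by_cases h : ∃ m, k ≤ m ∧ m < l ∧ fpos 1 hi f m = Col.green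
  · obtain ⟨m, hkm, hml, hg⟩ := h
    have h1 := bVal_le (by omega) hkm hg
    have h2 := le_aVal (k := l) (by omega) hml hg
    right; omega
  · left
    push Not at h
    obtain ⟨a1, a2, a3, a4⟩ := aVal_spec (hi := hi) (f := f) hk
    obtain ⟨c1, c2, c3, c4⟩ := aVal_spec (hi := hi) (f := f) (k := l) (by omega)
    obtain ⟨b1, b2, b3⟩ := bVal_spec (hi := hi) (f := f) (k := k) (by omega)
    obtain ⟨d1, d2, d3⟩ := bVal_spec (hi := hi) (f := f) hl
    have hA := le_aVal (k := l) (m := aVal 1 hi f k - 1) (by omega) (by omega) a4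
    have hC : aVal 1 hi f l ≤ k := by
      by_contra hlt
      exact h _ (by omega) (by omega) c4
    have hB : l ≤ bVal 1 hi f k := by
      by_contra hlt
      exact h _ b1 (by omega) b3
    have hA' : aVal 1 hi f l - 1 < aVal 1 hi f k := le_aVal hk (by omega) c4
    have hB' := bVal_le (by omega) hB b3
    have hB'' := bVal_le (k := k) (by omega) (by omega) d3
    omega

/-- The reflected point `←k` of `k` inside its red block. -/
noncomputable def refl (hi : ℕ) (f : ℕ → Col) (k : ℕ) : ℕ :=
  aVal 1 hi f k + bVal 1 hi f k - k

lemma refl_injOn : Set.InjOn (refl hi f) (Set.Icc 1 hi) := by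
  have key : ∀ k l, 1 ≤ k → k < l → l ≤ hi → refl hi f k ≠ refl hi f l := by
    intro k l hk hkl hl
    obtain ⟨-, a2, -⟩ := aVal_spec (hi := hi) (f := f) hk
    obtain ⟨-, c2, -⟩ := aVal_spec (hi := hi) (f := f) (k := l) (by omega)
    obtain ⟨b1, -⟩ := bVal_spec (hi := hi) (f := f) (k := k) (by omega)
    obtain ⟨d1, -⟩ := bVal_spec (hi := hi) (f := f) hl
    unfold refl
    rcases aVal_bVal_dichotomy (f := f) hk hkl hl with h | h <;> omega
  intro k hk l hl h
  rcases lt_trichotomy k l with hlt | heq | hgt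
  · exact absurd h (key k l hk.1 hlt hl.2)
  · exact heq
  · exact absurd h.symm (key l k hl.1 hgt hk.2)

/-- `k ↦ ←k` preserves an interval `[a, b]` delimited by green positions. -/
lemma refl_mem {a b k : ℕ} (ha : 1 ≤ a) (hb : b ≤ hi) (hak : a ≤ k) (hkb : k ≤ b)
    (hga : fpos 1 hi f (a - 1) = Col.green) (hgb : fpos 1 hi f b = Col.green) :
    a ≤ refl hi f k ∧ refl hi f k ≤ b := by
  have h1 := le_aVal (k := k) (m := a - 1) (by omega) (by omega) hga
  have h2 := bVal_le (by omega) hkb hgb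
  obtain ⟨-, a2, -⟩ := aVal_spec (hi := hi) (f := f) (k := k) (by omega)
  obtain ⟨b1, -⟩ := bVal_spec (hi := hi) (f := f) (k := k) (by omega)
  unfold refl
  omega

end Blocks

section Invariant

variable {μ m : ℕ} {E : ℕ → ℕ → Prop} {s : (ℕ → ℕ) × (ℕ → Col)}

/-- The invariant of the iteration with frontier `m`: the labelling is injective on `[μ]`, every
eligible pair inside `[1, m]` has a red position right of its left end, and all positions from
`m⁺` on are green. -/
structure Inv (μ : ℕ) (E : ℕ → ℕ → Prop) (m : ℕ) (s : (ℕ → ℕ) × (ℕ → Col)) : Prop where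
  inj : Set.InjOn s.1 (Set.Icc 1 μ)
  red : ∀ x y, 1 ≤ x → x < y → y ≤ m → y ≤ μ → E (s.1 x) (s.1 y) → fpos 1 μ s.2 x = Col.red
  green : ∀ k, m ≤ k → fpos 1 μ s.2 k = Col.green

/-- The right end of an eligible pair with green left end is a candidate for `j`. -/
lemma Inv.jSpec_of_green (h : Inv μ E m s) {x y : ℕ} (hx : 1 ≤ x) (hxy : x < y) (hy : y ≤ μ)
    (hE : E (s.1 x) (s.1 y)) (hg : fpos 1 μ s.2 x = Col.green) : jSpec 1 μ E s.1 s.2 y := by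
  refine ⟨by omega, hy, x, hx, hxy, hg, ?_, hE⟩
  by_cases hym : y ≤ m
  · have := h.red x y hx hxy hym hy hE
    rw [hg] at this
    cases this
  · exact h.green _ (by omega)

lemma Inv.le_jVal (h : Inv μ E m s) {x y : ℕ} (hx : 1 ≤ x) (hxy : x < y) (hy : y ≤ μ)
    (hE : E (s.1 x) (s.1 y)) (hg : fpos 1 μ s.2 x = Col.green) : jVal 1 μ E s.1 s.2 ≤ y :=
  Nat.sInf_le (h.jSpec_of_green hx hxy hy hE hg)

lemma jVal_spec (hj : hasJ 1 μ E s.1 s.2) : jSpec 1 μ E s.1 s.2 (jVal 1 μ E s.1 s.2) :=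
  Nat.sInf_mem (s := {j | jSpec 1 μ E s.1 s.2 j}) hj

lemma iVal_spec (hj : hasJ 1 μ E s.1 s.2) :
    1 ≤ iVal 1 μ E s.1 s.2 ∧ iVal 1 μ E s.1 s.2 < jVal 1 μ E s.1 s.2 ∧
      fpos 1 μ s.2 (iVal 1 μ E s.1 s.2) = Col.green ∧
      E (s.1 (iVal 1 μ E s.1 s.2)) (s.1 (jVal 1 μ E s.1 s.2)) := by
  obtain ⟨-, -, i, h1, h2, h3, -, h5⟩ := jVal_spec hj
  exact Nat.sSup_mem (s := {i | 1 ≤ i ∧ i < jVal 1 μ E s.1 s.2 ∧ fpos 1 μ s.2 i = Col.green ∧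
    E (s.1 i) (s.1 (jVal 1 μ E s.1 s.2))}) ⟨i, h1, h2, h3, h5⟩
    ⟨jVal 1 μ E s.1 s.2, fun i hi => hi.2.1.le⟩

/-- The green partner of `j` is unique: two of them would form an eligible pair left of `j`. -/
lemma Inv.eq_iVal (h : Inv μ E m s) (hEsymm : ∀ x y, E x y → E y x)
    (hEclique : ∀ x y z, E x y → E y z → x ≠ z → E x z) (hj : hasJ 1 μ E s.1 s.2) {x : ℕ}
    (hx : 1 ≤ x) (hxj : x < jVal 1 μ E s.1 s.2)
    (hE : E (s.1 x) (s.1 (jVal 1 μ E s.1 s.2))) (hg : fpos 1 μ s.2 x = Col.green) :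
    x = iVal 1 μ E s.1 s.2 := by
  obtain ⟨i1, i2, i3, i4⟩ := iVal_spec hj
  have hjμ := (jVal_spec hj).2.1
  by_contra hne
  have hlab : s.1 x ≠ s.1 (iVal 1 μ E s.1 s.2) := fun heq =>
    hne (h.inj ⟨hx, by omega⟩ ⟨i1, by omega⟩ heq)
  have hxi := hEclique _ _ _ hE (hEsymm _ _ i4) hlab
  rcases Nat.lt_or_gt_of_ne hne with hlt | hgt
  · have := h.le_jVal hx hlt (by omega) hxi hg
    omega
  · have := h.le_jVal i1 hgt (by omega) (hEsymm _ _ hxi) i3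
    omega

/-- A step of `T` away from a fixed point moves the frontier to `j`. -/
lemma Inv.step (h : Inv μ E m s) (hEsymm : ∀ x y, E x y → E y x)
    (hEclique : ∀ x y z, E x y → E y z → x ≠ z → E x z) (hj : hasJ 1 μ E s.1 s.2) :
    Inv μ E (jVal 1 μ E s.1 s.2) (Tstep 1 μ E s) := by
  obtain ⟨i1, i2, i3, i4⟩ := iVal_spec hj
  have hjμ := (jVal_spec hj).2.1
  have hEq := fun x => h.eq_iVal hEsymm hEclique hj (x := x)
  have hle : ∀ {x y}, 1 ≤ x → x < y → y ≤ μ → E (s.1 x) (s.1 y) →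
    fpos 1 μ s.2 x = Col.green → jVal 1 μ E s.1 s.2 ≤ y := h.le_jVal
  have hmj : m < jVal 1 μ E s.1 s.2 := by
    by_contra hlt
    have := h.red _ _ i1 i2 (by omega) hjμ i4
    rw [i3] at this
    cases this
  obtain ⟨a1, a2, -, a4⟩ := aVal_spec (hi := μ) (f := s.2) i1
  have hgj := h.green _ hmj.le
  have hb : bVal 1 μ s.2 (jVal 1 μ E s.1 s.2) = jVal 1 μ E s.1 s.2 := by
    unfold bVal
    rw [if_pos hgj]
  have hT : Tstep 1 μ E s =
      (fun k => if aVal 1 μ s.2 (iVal 1 μ E s.1 s.2) ≤ k ∧ k ≤ jVal 1 μ E s.1 s.2 then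
        s.1 (refl μ s.2 (aVal 1 μ s.2 (iVal 1 μ E s.1 s.2) + jVal 1 μ E s.1 s.2 - k)) else s.1 k,
       fun k => if aVal 1 μ s.2 (iVal 1 μ E s.1 s.2) ≤ k ∧ k < jVal 1 μ E s.1 s.2 then Col.red
        else s.2 k) := by
    unfold Tstep
    rw [if_pos hj]
    simp only [hb, refl]
  rw [hT]
  generalize jVal 1 μ E s.1 s.2 = j at *
  generalize iVal 1 μ E s.1 s.2 = i at *
  generalize aVal 1 μ s.2 i = a at *
  have hmem : ∀ k, a ≤ k → k ≤ j →
      a ≤ refl μ s.2 (a + j - k) ∧ refl μ s.2 (a + j - k) ≤ j := fun k h1 h2 =>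
    refl_mem a1 hjμ (by omega) (by omega) a4 hgj
  refine ⟨?_, ?_, ?_⟩
  · intro k hk l hl hkl
    obtain ⟨hk1, hk2⟩ := hk
    obtain ⟨hl1, hl2⟩ := hl
    dsimp only at hkl
    split_ifs at hkl with hka hla hla
    · have hk' := hmem k hka.1 hka.2
      have hl' := hmem l hla.1 hla.2
      have h1 := h.inj ⟨by omega, by omega⟩ ⟨by omega, by omega⟩ hkl
      have h2 := refl_injOn ⟨by omega, by omega⟩ ⟨by omega, by omega⟩ h1
      omega
    · have hk' := hmem k hka.1 hka.2
      have h1 := h.inj ⟨by omega, by omega⟩ ⟨hl1, hl2⟩ hkl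
      omega
    · have hl' := hmem l hla.1 hla.2
      have h1 := h.inj ⟨hk1, hk2⟩ ⟨by omega, by omega⟩ hkl
      omega
    · exact h.inj ⟨hk1, hk2⟩ ⟨hl1, hl2⟩ hkl
  · intro x y hx hxy hyj hyμ hE
    dsimp only at hE ⊢
    unfold fpos
    rw [if_pos ⟨hx, by omega⟩]
    dsimp only
    by_cases hxa : a ≤ x
    · rw [if_pos ⟨hxa, by omega⟩]
    · rw [if_neg (by omega)]
      rw [if_neg (by omega)] at hE
      -- `x < a`, so the pair comes from an eligible pair `{x, z}` of the previous state.
      obtain ⟨z, hxz, hzj, hzE⟩ : ∃ z, x < z ∧ z ≤ j ∧ E (s.1 x) (s.1 z) := by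
        split_ifs at hE with hya
        · have hy' := hmem y hya.1 hya.2
          exact ⟨_, by omega, by omega, hE⟩
        · exact ⟨y, hxy, hyj, hE⟩
      have hfx : fpos 1 μ s.2 x = s.2 x := by
        unfold fpos
        rw [if_pos ⟨hx, by omega⟩]
      rw [← hfx, ← ne_green]
      intro hg
      have h1 := hle hx hxz (by omega) hzE hg
      obtain rfl : z = j := by omega
      have h2 := hEq x hx hxz hzE hg
      omega
  · intro k hk
    have := h.green k (by omega)
    unfold fpos at this ⊢
    dsimp only
    rwa [if_neg (by omega : ¬ (a ≤ k ∧ k < j))]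

lemma exists_inv (hEsymm : ∀ x y, E x y → E y x)
    (hEclique : ∀ x y z, E x y → E y z → x ≠ z → E x z) {π₀ : ℕ → ℕ}
    (hπ₀ : Set.InjOn π₀ (Set.Icc 1 μ)) (r : ℕ) : ∃ m, Inv μ E m (TIter 1 μ E π₀ r) := by
  induction r with
  | zero =>
    refine ⟨0, hπ₀, fun x y _ _ _ _ _ => by omega, fun k _ => ?_⟩
    simp [TIter, fpos]
  | succ r ih =>
    obtain ⟨m, hm⟩ := ih
    have hs : TIter 1 μ E π₀ (r + 1) = Tstep 1 μ E (TIter 1 μ E π₀ r) :=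
      Function.iterate_succ_apply' _ _ _
    rw [hs]
    by_cases hj : hasJ 1 μ E (TIter 1 μ E π₀ r).1 (TIter 1 μ E π₀ r).2
    · exact ⟨_, hm.step hEsymm hEclique hj⟩
    · refine ⟨m, ?_⟩
      unfold Tstep
      rwa [if_neg hj]

end Invariant

end TOp

open TOp in
/-- Given `r ≥ 0` and any pair `{x,y} ∈ π_r⁻¹(𝓔)` with `x < y`,
at least one of the following holds: `{x,y} = {i_r, j_r}`, or `f_r(x⁺) = red`, or
`y ≥ j_r + 1` (as extended naturals, `j_r = +∞` when `(π_r,f_r)` is a fixed point). -/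
theorem stmt9 (μ : ℕ) (hμ : 2 ≤ μ) (E : ℕ → ℕ → Prop)
    (hEsymm : ∀ x y, E x y → E y x)
    (hEirr : ∀ x, ¬ E x x)
    (hEmem : ∀ x y, E x y → 1 ≤ x ∧ x ≤ μ ∧ 1 ≤ y ∧ y ≤ μ)
    (hEclique : ∀ x y z, E x y → E y z → x ≠ z → E x z)
    (π₀ : ℕ → ℕ) (hπ₀ : Set.BijOn π₀ (Set.Icc 1 μ) (Set.Icc 1 μ))
    (r x y : ℕ) (hx : 1 ≤ x) (hy : y ≤ μ) (hxy : x < y)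
    (hpair : E ((TIter 1 μ E π₀ r).1 x) ((TIter 1 μ E π₀ r).1 y)) :
    (hasJ 1 μ E (TIter 1 μ E π₀ r).1 (TIter 1 μ E π₀ r).2 ∧
      x = iVal 1 μ E (TIter 1 μ E π₀ r).1 (TIter 1 μ E π₀ r).2 ∧
      y = jVal 1 μ E (TIter 1 μ E π₀ r).1 (TIter 1 μ E π₀ r).2) ∨
    fpos 1 μ (TIter 1 μ E π₀ r).2 x = Col.red ∨
    jE 1 μ E (TIter 1 μ E π₀ r).1 (TIter 1 μ E π₀ r).2 + 1 ≤ (y : ℕ∞) := by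
  obtain ⟨m, h⟩ := exists_inv hEsymm hEclique hπ₀.injOn r
  by_cases hg : fpos 1 μ (TIter 1 μ E π₀ r).2 x = Col.green
  · have hj : hasJ 1 μ E (TIter 1 μ E π₀ r).1 (TIter 1 μ E π₀ r).2 :=
      ⟨y, h.jSpec_of_green hx hxy hy hpair hg⟩
    rcases (h.le_jVal hx hxy hy hpair hg).eq_or_lt with heq | hlt
    · left
      rw [← heq] at hxy hpair
      exact ⟨hj, h.eq_iVal hEsymm hEclique hj hx hxy hpair hg, heq.symm⟩
    · right; right
      unfold jE
      rw [if_pos hj]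
      exact_mod_cast hlt
  · exact Or.inr (Or.inl (ne_green.1 hg))
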